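/- arXiv:2002.00260 — 2 statements merged into one kernel-verified Lean document; each statement's English description precedes it below -/
import Mathlib

section
/- Under Assumptions 1 and 2, the SA iterates satisfy ‖x(t)‖_v ≤ (1/(1−γ)) · ((1+γ)‖x*‖_v + w̄/v̲) almost surely for every t ≥ 0. -/
/-!
Write `K = (1 + γ)‖x*‖_v + w̄ / v̲` and `B = K / (1 - γ)`, so that `γ B + K = B`. Comparing `F x` with
`F x* = x*` gives `‖F x‖_v ≤ γ ‖x‖_v + (1 + γ)‖x*‖_v`. Hence, if `‖x(t)‖_v ≤ B`, the target
`F_i(x(t)) + w(t)` of the updated coordinate has absolute value at most `(γ B + K) v_i = B v_i`, and the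
new coordinate is a convex combination of this target and the old coordinate. The ball of radius `B`
is therefore invariant wherever the noise bound holds, and it contains `x(0) = 0`.
-/

open MeasureTheory Finset

/-- Weighted infinity norm `‖x‖_v = max_i |x_i| / v_i`. -/
noncomputable def vnorm {n : ℕ} (v x : Fin n → ℝ) : ℝ := ⨆ i, |x i| / v i

lemma abs_le_vnorm_mul {n : ℕ} {v : Fin n → ℝ} (hv : ∀ i, 0 < v i) (x : Fin n → ℝ) (i : Fin n) :
    |x i| ≤ vnorm v x * v i :=
  (div_le_iff₀ (hv i)).1
    (le_ciSup (f := fun i => |x i| / v i) (Set.finite_range _).bddAbove i)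

lemma vnorm_le {n : ℕ} (hn : 0 < n) {v : Fin n → ℝ} (hv : ∀ i, 0 < v i) {x : Fin n → ℝ} {B : ℝ}
    (h : ∀ i, |x i| ≤ B * v i) : vnorm v x ≤ B := by
  have : Nonempty (Fin n) := ⟨⟨0, hn⟩⟩
  exact ciSup_le fun i => (div_le_iff₀ (hv i)).2 (h i)

lemma vnorm_nonneg {n : ℕ} {v : Fin n → ℝ} (hv : ∀ i, 0 < v i) (x : Fin n → ℝ) : 0 ≤ vnorm v x :=
  Real.iSup_nonneg fun i => div_nonneg (abs_nonneg _) (hv i).le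

/-- The growth bound on `F` obtained by comparison with the fixed point, read off one coordinate. -/
lemma abs_apply_le_of_fixed {n : ℕ} (hn : 0 < n) {v : Fin n → ℝ} (hv : ∀ i, 0 < v i)
    {F : (Fin n → ℝ) → (Fin n → ℝ)} {γ : ℝ} (hγ0 : 0 < γ)
    (hcontr : ∀ x y, vnorm v (F x - F y) ≤ γ * vnorm v (x - y))
    {xstar : Fin n → ℝ} (hfix : F xstar = xstar) (x : Fin n → ℝ) (i : Fin n) :
    |F x i| ≤ (γ * vnorm v x + (1 + γ) * vnorm v xstar) * v i := by
  have hsub : vnorm v (x - xstar) ≤ vnorm v x + vnorm v xstar := vnorm_le hn hv fun j => by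
    have h1 := abs_le_vnorm_mul hv x j
    have h2 := abs_le_vnorm_mul hv xstar j
    have h3 : |x j - xstar j| ≤ |x j| + |xstar j| := abs_sub _ _
    simp only [Pi.sub_apply]
    linarith
  have hF : vnorm v (F x - xstar) ≤ γ * (vnorm v x + vnorm v xstar) := by
    have h := hcontr x xstar
    rw [hfix] at h
    exact h.trans (mul_le_mul_of_nonneg_left hsub hγ0.le)
  have h1 := abs_le_vnorm_mul hv (F x - xstar) i
  have h2 := abs_le_vnorm_mul hv xstar i
  have h3 := mul_le_mul_of_nonneg_right hF (hv i).le
  have h4 : |F x i| ≤ |F x i - xstar i| + |xstar i| := by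
    simpa using abs_add_le (F x i - xstar i) (xstar i)
  simp only [Pi.sub_apply] at h1
  linarith

/-- **Proposition 3.** Under the contraction assumption on `F` and the bounded
martingale-difference noise assumption on `w`, the asynchronous SA iterates satisfy
`‖x(t)‖_v ≤ (1/(1-γ))·((1+γ)‖x*‖_v + w̄/v̲)` almost surely, for every `t ≥ 0`. -/
theorem SA_iterates_bounded
    {Ω : Type*} {m0 : MeasurableSpace Ω} (μ : Measure Ω) [IsProbabilityMeasure μ]
    (ℱ : Filtration ℕ m0)
    (n : ℕ) (hn : 0 < n) (v : Fin n → ℝ) (hv : ∀ i, 0 < v i)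
    -- Assumption 1 (contraction)
    (F : (Fin n → ℝ) → (Fin n → ℝ)) (γ C : ℝ) (hγ0 : 0 < γ) (hγ1 : γ < 1) (hC : 0 < C)
    (hcontr : ∀ x y, vnorm v (F x - F y) ≤ γ * vnorm v (x - y))
    (hFbd : ∀ x, vnorm v (F x) ≤ γ * vnorm v x + C)
    (xstar : Fin n → ℝ) (hfix : F xstar = xstar)
    -- the asynchronous SA scheme
    (idx : ℕ → Ω → Fin n) (hidx : ∀ t, Measurable[ℱ t] (idx t))
    (w : ℕ → Ω → ℝ) (wbar : ℝ)
    (α : ℕ → ℝ) (hα : ∀ t, α t ∈ Set.Ioc (0 : ℝ) 1)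
    (X : ℕ → Ω → Fin n → ℝ) (hX0 : ∀ ω, X 0 ω = 0)
    (hupd : ∀ t ω i, X (t + 1) ω i =
      if i = idx t ω then X t ω i + α t * (F (X t ω) i - X t ω i + w t ω) else X t ω i)
    -- Assumption 2 (martingale difference noise)
    (hw_meas : ∀ t, Measurable[ℱ (t + 1)] (w t))
    (hw_mean : ∀ t, μ[w t | ℱ t] =ᵐ[μ] 0)
    (hw_bd : ∀ t, ∀ᵐ ω ∂μ, |w t ω| ≤ wbar) :
    ∀ t, ∀ᵐ ω ∂μ, vnorm v (X t ω) ≤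
      (1 / (1 - γ)) * ((1 + γ) * vnorm v xstar + wbar / ⨅ i, v i) := by
  have : Nonempty (Fin n) := ⟨⟨0, hn⟩⟩
  have hmin : 0 < ⨅ i, v i := by
    obtain ⟨j, hj⟩ := exists_eq_ciInf_of_finite (f := v)
    exact hj ▸ hv j
  -- An almost sure property under a probability measure holds at some point.
  have hwbar : 0 ≤ wbar := by
    obtain ⟨ω, hω⟩ := (hw_bd 0).exists
    exact (abs_nonneg _).trans hω
  have hγ : 0 < 1 - γ := by linarith
  set W := wbar / ⨅ i, v i with hW
  have hW0 : 0 ≤ W := div_nonneg hwbar hmin.le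
  have hS0 := vnorm_nonneg hv xstar
  set B := (1 / (1 - γ)) * ((1 + γ) * vnorm v xstar + W) with hB
  have hB0 : 0 ≤ B := by positivity
  have hBfix : γ * B + ((1 + γ) * vnorm v xstar + W) = B := by
    rw [hB]
    field_simp
    ring
  have hwW : ∀ i, wbar ≤ W * v i := fun i => by
    have h1 : (⨅ i, v i) ≤ v i := ciInf_le (Set.finite_range v).bddBelow i
    calc wbar = W * ⨅ i, v i := by rw [hW, div_mul_cancel₀ _ hmin.ne']
      _ ≤ W * v i := mul_le_mul_of_nonneg_left h1 hW0
  intro t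
  induction t with
  | zero =>
    refine Filter.Eventually.of_forall fun ω => vnorm_le hn hv fun i => ?_
    simpa [hX0] using mul_nonneg hB0 (hv i).le
  | succ t ih =>
    filter_upwards [ih, hw_bd t] with ω hx hw
    refine vnorm_le hn hv fun i => ?_
    have hold : |X t ω i| ≤ B * v i :=
      (abs_le_vnorm_mul hv _ i).trans (mul_le_mul_of_nonneg_right hx (hv i).le)
    rw [hupd]
    split_ifs
    · obtain ⟨ha0, ha1⟩ := hα t
      have htarget : |F (X t ω) i + w t ω| ≤ B * v i := by
        have h1 := abs_apply_le_of_fixed hn hv hγ0 hcontr hfix (X t ω) i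
        have h2 := abs_add_le (F (X t ω) i) (w t ω)
        have h3 := hwW i
        have h4 := mul_le_mul_of_nonneg_right (mul_le_mul_of_nonneg_left hx hγ0.le) (hv i).le
        have h5 := congrArg (· * v i) hBfix
        linarith
      calc |X t ω i + α t * (F (X t ω) i - X t ω i + w t ω)|
          = |(1 - α t) * X t ω i + α t * (F (X t ω) i + w t ω)| := by ring_nf
        _ ≤ (1 - α t) * |X t ω i| + α t * |F (X t ω) i + w t ω| := by
          refine (abs_add_le _ _).trans_eq ?_
          rw [abs_mul, abs_mul, abs_of_nonneg (sub_nonneg.2 ha1), abs_of_pos ha0]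
        _ ≤ (1 - α t) * (B * v i) + α t * (B * v i) := by
          have := sub_nonneg.2 ha1
          gcongr
        _ = B * v i := by ring
    · exact hold
end

section
/- Let a_t = ‖x(t) − x*‖_v. Under Assumptions 1, 2 and 3, almost surely, for every t ≥ τ: a_{t+1} ≤ β̃_{τ−1,t} a_τ + γ · sup_{1≤i≤n} Σ_{k=τ}^{t} b_{k,t,i} a_k + ‖Σ_{k=τ}^{t} α_k B̃_{k,t} ε(k)‖_v + ‖Σ_{k=τ}^{t} α_k B̃_{k,t} φ(k)‖_v. -/
/-!
The bound is pathwise once `0 ≤ d_{t,i} ≤ 1` and `σ ≤ d_{t,i}` are known for all `t ≥ τ`, which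
holds off a single null set: the upper bound is monotonicity of conditional expectation applied to
an indicator (`condExp_indicator_idx_le_one`), the lower one is the exploration assumption.

On such a path, `ε(t) + φ(t)` is the difference between the actual update direction and its
`D_t`-average, so each coordinate of the error `y_t = x_i(t) - x*_i` obeys the scalar linear
recursion `y_{t+1} = (1 - α_t d_{t,i}) y_t + α_t (d_{t,i} (F_i(x(t)) - x*_i) + ε_i(t) + φ_i(t))`.
Solving it by variation of constants (`linear_recursion_unroll`) and bounding the four resulting
terms separately, with `|F_i(x(k)) - x*_i| ≤ v_i γ a_k` from the contraction property, gives the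
claim coordinate by coordinate.
-/

open MeasureTheory Finset

theorem abs_div_le_vnorm {n : ℕ} (v x : Fin n → ℝ) (i : Fin n) : |x i| / v i ≤ vnorm v x :=
  le_ciSup (f := fun i => |x i| / v i) (Set.finite_range _).bddAbove i

/-- Variation of constants for a scalar linear recursion started at time `τ`. -/
theorem linear_recursion_unroll (y c u : ℕ → ℝ) (τ : ℕ)
    (h : ∀ t, τ ≤ t → y (t + 1) = c t * y t + u t) (t : ℕ) (ht : τ ≤ t) :
    y (t + 1) = (∏ l ∈ Finset.Icc τ t, c l) * y τ +
      ∑ k ∈ Finset.Icc τ t, (∏ l ∈ Finset.Icc (k + 1) t, c l) * u k := by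
  induction t, ht using Nat.le_induction with
  | base => simp [h τ le_rfl]
  | succ t ht ih =>
    rw [h (t + 1) (by omega), ih, Finset.prod_Icc_succ_top (by omega),
      Finset.sum_Icc_succ_top (by omega)]
    have hsum : ∑ k ∈ Finset.Icc τ t, (∏ l ∈ Finset.Icc (k + 1) (t + 1), c l) * u k =
        c (t + 1) * ∑ k ∈ Finset.Icc τ t, (∏ l ∈ Finset.Icc (k + 1) t, c l) * u k := by
      rw [Finset.mul_sum]
      refine Finset.sum_congr rfl fun k hk => ?_
      have hk' := (Finset.mem_Icc.mp hk).2
      rw [Finset.prod_Icc_succ_top (by omega)]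
      ring
    rw [hsum]
    simp
    ring

theorem condExp_indicator_idx_le_one {Ω : Type*} {m m0 : MeasurableSpace Ω} (hm : m ≤ m0)
    (μ : Measure Ω) [IsProbabilityMeasure μ] {n : ℕ} (idx : Ω → Fin n) (hidx : Measurable idx)
    (i : Fin n) :
    ∀ᵐ ω ∂μ, (μ[(fun ω => if idx ω = i then (1 : ℝ) else 0) | m]) ω ≤ 1 := by
  have hmeas : Measurable fun ω => if idx ω = i then (1 : ℝ) else 0 :=
    Measurable.ite (hidx (measurableSet_singleton i)) measurable_const measurable_const
  have hint : Integrable (fun ω => if idx ω = i then (1 : ℝ) else 0) μ := by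
    refine Integrable.of_bound hmeas.aestronglyMeasurable 1 (ae_of_all _ fun ω => ?_)
    split_ifs <;> simp
  have hle : (fun ω => if idx ω = i then (1 : ℝ) else 0) ≤ᵐ[μ] fun _ => (1 : ℝ) :=
    ae_of_all _ fun ω => by dsimp only; split_ifs <;> simp
  have hmono := condExp_mono (m := m) hint (integrable_const (1 : ℝ)) hle
  rw [condExp_const hm] at hmono
  exact hmono

/-- **Lemma 1 (error decomposition).** Under Assumptions 1, 2 and 3, with
`a_t = ‖x(t) - x*‖_v`, almost surely, for every `t ≥ τ`:
`a_{t+1} ≤ β̃_{τ-1,t} a_τ + γ sup_i Σ_{k=τ}^t b_{k,t,i} a_k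
  + ‖Σ_{k=τ}^t α_k B̃_{k,t} ε(k)‖_v + ‖Σ_{k=τ}^t α_k B̃_{k,t} φ(k)‖_v`,
where `b_{k,t,i} = α_k d_{k,i} ∏_{ℓ=k+1}^t (1-α_ℓ d_{ℓ,i})`,
`B̃_{k,t} = ∏_{ℓ=k+1}^t (I-α_ℓ D_ℓ)` and `β̃_{τ-1,t} = ∏_{ℓ=τ}^t (1-σα_ℓ)`. -/
theorem SA_error_decomposition
    {Ω : Type*} {m0 : MeasurableSpace Ω} (μ : Measure Ω) [IsProbabilityMeasure μ]
    (ℱ : Filtration ℕ m0)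
    (n : ℕ) (hn : 0 < n) (v : Fin n → ℝ) (hv : ∀ i, 0 < v i)
    -- Assumption 1 (contraction)
    (F : (Fin n → ℝ) → (Fin n → ℝ)) (γ C : ℝ) (hγ0 : 0 < γ) (hγ1 : γ < 1) (hC : 0 < C)
    (hcontr : ∀ x y, vnorm v (F x - F y) ≤ γ * vnorm v (x - y))
    (hFbd : ∀ x, vnorm v (F x) ≤ γ * vnorm v x + C)
    (xstar : Fin n → ℝ) (hfix : F xstar = xstar)
    -- the asynchronous SA scheme
    (idx : ℕ → Ω → Fin n) (hidx : ∀ t, Measurable[ℱ t] (idx t))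
    (w : ℕ → Ω → ℝ) (wbar : ℝ)
    (α : ℕ → ℝ) (hα : ∀ t, α t ∈ Set.Ioc (0 : ℝ) 1)
    (X : ℕ → Ω → Fin n → ℝ) (hX0 : ∀ ω, X 0 ω = 0)
    (hupd : ∀ t ω i, X (t + 1) ω i =
      if i = idx t ω then X t ω i + α t * (F (X t ω) i - X t ω i + w t ω) else X t ω i)
    -- Assumption 2 (martingale difference noise)
    (hw_meas : ∀ t, Measurable[ℱ (t + 1)] (w t))
    (hw_mean : ∀ t, μ[w t | ℱ t] =ᵐ[μ] 0)
    (hw_bd : ∀ t, ∀ᵐ ω ∂μ, |w t ω| ≤ wbar)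
    -- Assumption 3 (sufficient exploration), with `d_{t,i} = P(i_t = i | ℱ_{t-τ})`
    (sg : ℝ) (τ : ℕ) (hsg0 : 0 < sg) (hsg1 : sg < 1) (hτ : 0 < τ)
    (d : ℕ → Fin n → Ω → ℝ)
    (hd : ∀ t i, d t i = μ[(fun ω => if idx t ω = i then (1 : ℝ) else 0) | ℱ (t - τ)])
    (hexpl : ∀ (i : Fin n) (t : ℕ), τ ≤ t → ∀ᵐ ω ∂μ, sg ≤ d t i ω)
    -- the noise vector `ε(t)`
    (eps : ℕ → Ω → Fin n → ℝ)
    (heps : ∀ t ω i, eps t ω i =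
      ((if idx t ω = i then (1 : ℝ) else 0) - d t i ω) *
          (F (X (t - τ) ω) i - X (t - τ) ω i) +
        (if idx t ω = i then w t ω else 0))
    -- the drift vector `φ(t)`
    (phi : ℕ → Ω → Fin n → ℝ)
    (hphi : ∀ t ω i, phi t ω i =
      ((if idx t ω = i then (1 : ℝ) else 0) - d t i ω) *
        (F (X t ω) i - F (X (t - τ) ω) i - (X t ω i - X (t - τ) ω i))) :
    ∀ᵐ ω ∂μ, ∀ t, τ ≤ t →
      vnorm v (X (t + 1) ω - xstar) ≤
        (∏ ℓ ∈ Finset.Icc τ t, (1 - sg * α ℓ)) * vnorm v (X τ ω - xstar) +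
        γ * (⨆ i, ∑ k ∈ Finset.Icc τ t,
          (α k * d k i ω * ∏ ℓ ∈ Finset.Icc (k + 1) t, (1 - α ℓ * d ℓ i ω)) *
            vnorm v (X k ω - xstar)) +
        vnorm v (fun i => ∑ k ∈ Finset.Icc τ t,
          α k * ((∏ ℓ ∈ Finset.Icc (k + 1) t, (1 - α ℓ * d ℓ i ω)) * eps k ω i)) +
        vnorm v (fun i => ∑ k ∈ Finset.Icc τ t,
          α k * ((∏ ℓ ∈ Finset.Icc (k + 1) t, (1 - α ℓ * d ℓ i ω)) * phi k ω i)) := by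
  have hd1 : ∀ᵐ ω ∂μ, ∀ t i, d t i ω ≤ 1 := by
    rw [ae_all_iff]; intro t
    rw [ae_all_iff]; intro i
    rw [hd t i]
    exact condExp_indicator_idx_le_one (ℱ.le _) μ (idx t) ((hidx t).mono (ℱ.le t) le_rfl) i
  have hd0 : ∀ᵐ ω ∂μ, ∀ (i : Fin n) (t : ℕ), τ ≤ t → sg ≤ d t i ω := by
    simp only [ae_all_iff]
    exact hexpl
  filter_upwards [hd1, hd0] with ω h1 h0 t ht
  have : Nonempty (Fin n) := ⟨⟨0, hn⟩⟩
  refine ciSup_le fun i => ?_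
  have hvi := hv i
  have hc0 : ∀ l, τ ≤ l → 0 ≤ 1 - α l * d l i ω := fun l hl => by
    have := mul_le_one₀ (hα l).2 (hsg0.le.trans (h0 i l hl)) (h1 l i)
    linarith
  have hB : ∀ k, τ ≤ k → 0 ≤ ∏ l ∈ Finset.Icc (k + 1) t, (1 - α l * d l i ω) := fun k hk =>
    Finset.prod_nonneg fun l hl => hc0 l (by have := (Finset.mem_Icc.mp hl).1; omega)
  have hy := linear_recursion_unroll (fun k => X k ω i - xstar i) (fun k => 1 - α k * d k i ω)
    (fun k => α k * (d k i ω * (F (X k ω) i - xstar i) + eps k ω i + phi k ω i)) τ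
    (fun k _ => by
      simp only [hupd, heps, hphi, eq_comm (a := i)]
      split_ifs <;> ring) t ht
  have hsplit : X (t + 1) ω i - xstar i =
      (∏ l ∈ Finset.Icc τ t, (1 - α l * d l i ω)) * (X τ ω i - xstar i) +
      (∑ k ∈ Finset.Icc τ t, (α k * d k i ω * ∏ l ∈ Finset.Icc (k + 1) t, (1 - α l * d l i ω)) *
        (F (X k ω) i - xstar i)) +
      (∑ k ∈ Finset.Icc τ t,
        α k * ((∏ l ∈ Finset.Icc (k + 1) t, (1 - α l * d l i ω)) * eps k ω i)) +
      (∑ k ∈ Finset.Icc τ t,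
        α k * ((∏ l ∈ Finset.Icc (k + 1) t, (1 - α l * d l i ω)) * phi k ω i)) := by
    rw [hy, add_assoc, add_assoc, ← Finset.sum_add_distrib, ← Finset.sum_add_distrib]
    congr 1
    exact Finset.sum_congr rfl fun k _ => by ring
  have hinit : |(∏ l ∈ Finset.Icc τ t, (1 - α l * d l i ω)) * (X τ ω i - xstar i)| / v i ≤
      (∏ l ∈ Finset.Icc τ t, (1 - sg * α l)) * vnorm v (X τ ω - xstar) := by
    have hp0 : 0 ≤ ∏ l ∈ Finset.Icc τ t, (1 - α l * d l i ω) :=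
      Finset.prod_nonneg fun l hl => hc0 l (Finset.mem_Icc.mp hl).1
    have hp : ∏ l ∈ Finset.Icc τ t, (1 - α l * d l i ω) ≤
        ∏ l ∈ Finset.Icc τ t, (1 - sg * α l) :=
      Finset.prod_le_prod (fun l hl => hc0 l (Finset.mem_Icc.mp hl).1) fun l hl => by
        have := mul_le_mul_of_nonneg_left (h0 i l (Finset.mem_Icc.mp hl).1) (hα l).1.le
        linarith
    rw [abs_mul, abs_of_nonneg hp0, mul_div_assoc]
    exact mul_le_mul hp (abs_div_le_vnorm v (X τ ω - xstar) i) (by positivity) (hp0.trans hp)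
  have hdrift : |∑ k ∈ Finset.Icc τ t,
      (α k * d k i ω * ∏ l ∈ Finset.Icc (k + 1) t, (1 - α l * d l i ω)) *
        (F (X k ω) i - xstar i)| / v i ≤
      γ * (⨆ i, ∑ k ∈ Finset.Icc τ t,
          (α k * d k i ω * ∏ ℓ ∈ Finset.Icc (k + 1) t, (1 - α ℓ * d ℓ i ω)) *
            vnorm v (X k ω - xstar)) := by
    refine le_trans ?_ (mul_le_mul_of_nonneg_left
      (le_ciSup (Set.finite_range _).bddAbove i) hγ0.le)
    rw [div_le_iff₀ hvi, Finset.mul_sum, Finset.sum_mul]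
    refine (Finset.abs_sum_le_sum_abs _ _).trans (Finset.sum_le_sum fun k hk => ?_)
    have hk' := (Finset.mem_Icc.mp hk).1
    have hb : 0 ≤ α k * d k i ω * ∏ l ∈ Finset.Icc (k + 1) t, (1 - α l * d l i ω) :=
      mul_nonneg (mul_nonneg (hα k).1.le (hsg0.le.trans (h0 i k hk'))) (hB k hk')
    have hF : |F (X k ω) i - xstar i| ≤ γ * vnorm v (X k ω - xstar) * v i := by
      rw [← div_le_iff₀ hvi]
      refine le_trans ?_ (hcontr (X k ω) xstar)
      rw [hfix]
      exact abs_div_le_vnorm v (F (X k ω) - xstar) i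
    rw [abs_mul, abs_of_nonneg hb]
    exact (mul_le_mul_of_nonneg_left hF hb).trans_eq (by ring)
  refine le_trans ?_ (add_le_add (add_le_add (add_le_add hinit hdrift)
    (abs_div_le_vnorm v _ i)) (abs_div_le_vnorm v _ i))
  rw [Pi.sub_apply, hsplit, ← add_div, ← add_div, ← add_div]
  gcongr
  refine (abs_add_le _ _).trans ?_
  gcongr
  exact abs_add_three _ _ _
end
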